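/- arXiv:2202.09349 — 2 statements merged into one kernel-verified Lean document; each statement's English description precedes it below -/
import Mathlib

section
/- Assume that n exists and that n ≤ m + 1 (in particular m ≥ 1). Then there exists a sequence c_0, c_1, …, c_{m|α|−1} of elements of ℤ^s with c_0 = β, with c_0 < c_1 < ⋯ < c_{m|α|−1} < β + mα (for the componentwise order as defined, where a < b means a ≤ b and a ≠ b), and such that c_i ∈ K° + K° for every i with 0 ≤ i ≤ m|α| − 1. -/
open Finset Pointwise

/-- Elements of `ℤ^s`, compared componentwise. -/
abbrev Vec (s : ℕ) := Fin s → ℤ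

/-- A good local semigroup `S ⊆ ℕ^s` (encoded as a set of nonnegative vectors of `ℤ^s`):
`0 ∈ S`, `S + S ⊆ S`, closure under componentwise minima (G1), property (G2),
existence of a conductor (G3), and locality (G4). -/
def GoodLocal {s : ℕ} (S : Set (Vec s)) : Prop :=
  (∀ a ∈ S, 0 ≤ a) ∧
  (0 : Vec s) ∈ S ∧
  (∀ a ∈ S, ∀ b ∈ S, a + b ∈ S) ∧
  (∀ a ∈ S, ∀ b ∈ S, a ⊓ b ∈ S) ∧
  (∀ a ∈ S, ∀ b ∈ S, ∀ i : Fin s, a i = b i →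
    ∃ ε ∈ S, a i < ε i ∧
      ∀ j : Fin s, j ≠ i → min (a j) (b j) ≤ ε j ∧ (a j ≠ b j → ε j = min (a j) (b j))) ∧
  (∃ c : Vec s, 0 ≤ c ∧ ∀ x : Vec s, 0 ≤ x → c + x ∈ S) ∧
  (∀ a ∈ S, (∃ i, a i = 0) → a = 0)

/-- `Δ^S(a) = {b ∈ S : b_i = a_i for some i, and b_j > a_j for all j ≠ i}`. -/
def Delta {s : ℕ} (S : Set (Vec s)) (a : Vec s) : Set (Vec s) :=
  {b ∈ S | ∃ i : Fin s, b i = a i ∧ ∀ j : Fin s, j ≠ i → a j < b j}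

/-- The canonical ideal `K = {a ∈ ℤ^s : Δ^S(γ - a) = ∅}` where `γ = β - (1,…,1)`. -/
def Kideal {s : ℕ} (S : Set (Vec s)) (β : Vec s) : Set (Vec s) :=
  {a : Vec s | Delta S (β - 1 - a) = ∅}

/-- `K° = {a ∈ K : a < β}`. -/
def Kcirc {s : ℕ} (S : Set (Vec s)) (β : Vec s) : Set (Vec s) :=
  {a ∈ Kideal S β | a < β}

/-- `R_i = {a ∈ ℕ^s : (i-1)α < a < iα}`. -/
def Rset {s : ℕ} (α : Vec s) (i : ℤ) : Set (Vec s) :=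
  {a : Vec s | 0 ≤ a ∧ (i - 1) • α < a ∧ a < i • α}

lemma aux_chain {s : ℕ} : ∀ (N : ℕ) (v : Vec s), 0 ≤ v → ∑ t, v t = (N : ℤ) →
    ∃ f : ℕ → Vec s, f 0 = 0 ∧ f N = v ∧ ∀ t < N, f t < f (t + 1) := by
  intro N
  induction N with
  | zero =>
    intro v hv h
    refine ⟨fun _ => 0, rfl, ?_, by simp⟩
    have := (Finset.sum_eq_zero_iff_of_nonneg (fun i _ => hv i)).1 (by simpa using h)
    funext k
    exact (this k (mem_univ k)).symm
  | succ N ih =>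
    intro v hv h
    obtain ⟨k, hk⟩ : ∃ k, 1 ≤ v k := by
      by_contra! hcon
      have h0 : ∑ t, v t ≤ 0 := Finset.sum_nonpos (fun t _ => by have := hcon t; omega)
      push_cast at h
      omega
    obtain ⟨f, hf0, hfN, hf⟩ := ih (v - Pi.single k 1) (by
        intro l
        by_cases hl : l = k
        · subst hl; simp; omega
        · simpa [hl] using hv l) (by
        simp only [Pi.sub_apply, Finset.sum_sub_distrib, h]
        simp)
    refine ⟨fun t => if t ≤ N then f t else v, by simp [hf0], by simp, ?_⟩
    intro t ht
    by_cases h1 : t < N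
    · have h2 : t ≤ N := h1.le
      have h3 : t + 1 ≤ N := h1
      simp only [h2, h3, if_true]
      exact hf t h1
    · have h2 : t = N := by omega
      subst h2
      simp [hfN]

lemma aux_delta {s : ℕ} (S : Set (Vec s)) (hS : GoodLocal S) (β : Vec s)
    (hpos : ∀ i, 0 < β i) (hβ₂ : ∀ x : Vec s, 0 ≤ x → β + x ∈ S)
    (hβ₃ : ∀ c : Vec s, 0 ≤ c → (∀ x : Vec s, 0 ≤ x → c + x ∈ S) → β ≤ c) :
    Delta S (β - 1) = ∅ := by
  obtain ⟨-, -, -, hG1, hG2, -, -⟩ := hS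
  have hge : ∀ x : Vec s, β ≤ x → x ∈ S := by
    intro x hx
    have := hβ₂ (x - β) (sub_nonneg.2 hx)
    simpa using this
  by_contra hne
  obtain ⟨b, hb, i, hbi, hbj⟩ := Set.nonempty_iff_ne_empty.2 hne
  simp only [Pi.sub_apply, Pi.one_apply] at hbi hbj
  -- raise one coordinate
  have step : ∀ k, k ≠ i → ∀ N : ℕ, ∀ b ∈ S, b i = β i - 1 → (∀ j, j ≠ i → β j ≤ b j) →
      ∃ b' ∈ S, b' i = β i - 1 ∧ (∀ j, j ≠ i → b j ≤ b' j) ∧ β k + N ≤ b' k := by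
    intro k hk N
    induction N with
    | zero =>
      intro b hb h1 h2
      exact ⟨b, hb, h1, fun _ _ => le_rfl, by simpa using h2 k hk⟩
    | succ N ih =>
      intro b hb h1 h2
      obtain ⟨b', hb', h1', h2', h3'⟩ := ih b hb h1 h2
      obtain ⟨ε, hε, hεk, hεj⟩ := hG2 b' hb' (fun l => if l = k then b' l else b' l + 1)
        (hge _ (by
          intro l
          by_cases hl : l = k
          · subst hl
            simpa using (h2 l hk).trans (h2' l hk)
          · simp only [hl, if_false]
            by_cases hli : l = i
            · subst hli; omega
            · have := (h2 l hli).trans (h2' l hli); omega)) k (by simp)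
      have hεe : ∀ l, l ≠ k → ε l = b' l := by
        intro l hl
        have := (hεj l hl).2 (by simp [hl])
        simpa [hl] using this
      refine ⟨ε, hε, by rw [hεe i hk.symm, h1'], ?_, by push_cast; omega⟩
      intro j hj
      by_cases hjk : j = k
      · subst hjk; have := h2' j hj; omega
      · rw [hεe j hjk]; exact h2' j hj
  have raise : ∀ (x : Vec s) (T : Finset (Fin s)), ∃ b' ∈ S, b' i = β i - 1 ∧
      (∀ j, j ≠ i → β j ≤ b' j) ∧ ∀ k ∈ T, k ≠ i → x k ≤ b' k := by
    intro x T
    induction T using Finset.induction_on with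
    | empty => exact ⟨b, hb, hbi, fun j hj => by have := hbj j hj; omega, by simp⟩
    | insert k T hkT ih =>
      obtain ⟨b', hb', h1, h2, h3⟩ := ih
      by_cases hk : k = i
      · refine ⟨b', hb', h1, h2, ?_⟩
        intro l hl hli
        rcases Finset.mem_insert.1 hl with rfl | hl
        · exact absurd hk hli
        · exact h3 l hl hli
      · obtain ⟨b'', hb'', h1', h2', h3'⟩ := step k hk (x k - β k).toNat b' hb' h1 h2
        refine ⟨b'', hb'', h1', fun j hj => (h2 j hj).trans (h2' j hj), ?_⟩
        intro l hl hli
        rcases Finset.mem_insert.1 hl with rfl | hl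
        · have := Int.self_le_toNat (x l - β l); omega
        · exact (h3 l hl hli).trans (h2' l hli)
  have key := hβ₃ (β - Pi.single i 1) (by
    intro l
    have := hpos l
    by_cases hl : l = i
    · subst hl; simp; omega
    · simp [hl]; omega) (by
    intro x hx
    by_cases hxi : x i = 0
    · obtain ⟨b', hb', h1, h2, h3⟩ := raise (β + x) univ
      have hmin := hG1 b' hb' (β + x) (hβ₂ x hx)
      convert hmin using 1
      funext l
      by_cases hl : l = i
      · subst hl
        simp [hxi, h1]
      · have := h3 l (mem_univ l) hl
        simp only [Pi.add_apply] at this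
        simp [hl, this]
    · apply hge
      intro l
      have := hx l
      by_cases hl : l = i
      · subst hl; simp at this ⊢; omega
      · simpa [hl] using this)
  have := key i
  simp at this

lemma aux_F1 {s : ℕ} (S : Set (Vec s)) (α β : Vec s)
    (hSK : ∀ a ∈ S, a ∈ Kideal S β)
    (hα₃ : ∀ a ∈ S, a ≠ 0 → α ≤ a) (j : ℤ) (hjS : j • α ∈ S) (hjβ : j • α < β)
    (u : Vec s) (hu0 : 0 < u) (huα : u ≤ α) (hu : ∀ k, u ≠ Pi.single k 1) :
    β + j • α - u ∈ Kcirc S β + Kcirc S β := by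
  refine Set.mem_add.2 ⟨j • α, ⟨hSK _ hjS, hjβ⟩, β - u, ⟨?_, sub_lt_self _ hu0⟩, by abel⟩
  show Delta S _ = ∅
  by_contra hne
  obtain ⟨b, hb, k, hbk, hbl⟩ := Set.nonempty_iff_ne_empty.2 hne
  simp only [Pi.sub_apply, Pi.one_apply] at hbk hbl
  have hb0 : b = 0 := by
    by_contra h
    have h1 : α k ≤ b k := hα₃ b hb h k
    have h2 : u k ≤ α k := huα k
    have h3 : b k = β k - 1 - (β k - u k) := hbk
    linarith
  subst hb0
  apply hu k
  funext l
  by_cases hl : l = k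
  · subst hl; simp at hbk ⊢; omega
  · have h1 := hbl l hl
    have h2 := hu0.le l
    simp only [Pi.zero_apply] at h1 h2
    rw [Pi.single_eq_of_ne hl]
    omega

lemma aux_F2 {s : ℕ} (S : Set (Vec s)) (hS : GoodLocal S) (α β : Vec s)
    (hpos : ∀ i, 0 < α i) (hαS : ∀ r : ℕ, (r : ℤ) • α ∈ S)
    (hSK : ∀ a ∈ S, a ∈ Kideal S β) (j r : ℤ) (hr : 1 ≤ r)
    (hR : ∀ r', 1 ≤ r' → r' ≤ r → ¬ (Rset α r' ∩ S).Nonempty)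
    (y : Vec s) (hyS : y ∈ S) (hyβ : y < β) (w : Vec s) (hw : w = y - j • α)
    (hw1 : (r - 1) • α < w) (hw2 : w ≤ r • α) (i : Fin s) (hi : w i < r * α i) :
    β + j • α - Pi.single i 1 ∈ Kcirc S β + Kcirc S β := by
  obtain ⟨hnn, -, -, hG1, -, -, -⟩ := hS
  have hαS' : ∀ r : ℤ, 0 ≤ r → r • α ∈ S := by
    intro r hr
    have := hαS r.toNat
    rwa [Int.toNat_of_nonneg hr] at this
  have hw1' : ∀ l, (r - 1) * α l ≤ w l := fun l => by simpa using hw1.le l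
  have hw0 : ∀ l, 0 ≤ w l := fun l =>
    (mul_nonneg (by omega) (hpos l).le).trans (hw1' l)
  have hw2' : ∀ l, w l ≤ r * α l := fun l => by simpa using hw2 l
  have hwpos : (0 : Vec s) < w + Pi.single i 1 := by
    refine lt_of_lt_of_le (lt_of_le_of_lt ?_ hw1) ?_
    · intro l; simpa using mul_nonneg (by omega) (hpos l).le
    · exact le_add_of_nonneg_right (Pi.single_nonneg.2 (by norm_num))
  refine Set.mem_add.2 ⟨y, ⟨hSK _ hyS, hyβ⟩, β - (w + Pi.single i 1),
    ⟨?_, sub_lt_self _ hwpos⟩, by rw [hw]; abel⟩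
  show Delta S _ = ∅
  by_contra hne
  obtain ⟨b, hb, k, hbk, hbl⟩ := Set.nonempty_iff_ne_empty.2 hne
  simp only [Pi.sub_apply, Pi.one_apply, Pi.add_apply] at hbk hbl
  -- a contradiction criterion
  have crit : ∀ r', 1 ≤ r' → r' ≤ r → (∀ l, (r' - 1) * α l ≤ b l) →
      (∃ l, (r' - 1) * α l < b l) → (∃ l, b l < r' * α l) → False := by
    rintro r' h1 h2 h3 ⟨l, hl⟩ ⟨l', hl'⟩
    refine hR r' h1 h2 ⟨b ⊓ r' • α, ⟨?_, ?_, ?_⟩, hG1 _ hb _ (hαS' r' (by omega))⟩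
    · exact hnn _ (hG1 _ hb _ (hαS' r' (by omega)))
    · refine Pi.lt_def.2 ⟨fun t => ?_, l, ?_⟩
      · have := hpos t
        have := h3 t
        simp
        exact ⟨this, by nlinarith⟩
      · have := hpos l
        simp
        exact ⟨hl, by nlinarith⟩
    · exact Pi.lt_def.2 ⟨inf_le_right, l', by simpa using hl'⟩
  by_cases hki : k = i
  · subst hki
    simp at hbk
    have hbw : ∀ l, w l ≤ b l := by
      intro l
      by_cases hl : l = k
      · subst hl; omega
      · have := hbl l hl; simp [hl] at this; omega
    obtain ⟨-, l, hl⟩ := Pi.lt_def.1 hw1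
    simp at hl
    exact crit r hr le_rfl (fun l => (hw1' l).trans (hbw l)) ⟨l, hl.trans_le (hbw l)⟩
      ⟨k, by rw [hbk]; exact hi⟩
  · have hbi := hbl i (fun h => hki h.symm)
    simp [hki] at hbk hbi
    have hbw : ∀ l, l ≠ k → w l ≤ b l := by
      intro l hl
      have := hbl l hl
      by_cases hli : l = i
      · subst hli; simp at this; omega
      · simp [hli] at this; omega
    by_cases hc : (r - 1) * α k ≤ w k - 1
    · refine crit r hr le_rfl ?_ ⟨i, by have := hw1' i; omega⟩
        ⟨k, by have := hw2' k; omega⟩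
      intro l
      by_cases hl : l = k
      · subst hl; omega
      · exact (hw1' l).trans (hbw l hl)
    · have hwk : w k = (r - 1) * α k := by have := hw1' k; omega
      have hb0 := hnn b hb k
      simp only [Pi.zero_apply] at hb0
      have hr2 : 2 ≤ r := by
        by_contra h
        have : r = 1 := by omega
        subst this
        simp at hwk
        omega
      refine crit (r - 1) (by omega) (by omega) ?_ ⟨i, ?_⟩ ⟨k, by omega⟩
      · intro l
        have := hpos l
        by_cases hl : l = k
        · subst hl; nlinarith
        · have := hw1' l; have := hbw l hl; nlinarith
      · have := hpos i; have := hw1' i; nlinarith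

/-- Lemma 3.2 (Lemma "maismaroto"): there is a strictly increasing sequence
`β = c₀ < c₁ < … < c_{m|α|-1} < β + mα` with every `cᵢ ∈ K° + K°`. -/
theorem max_noether_seq_part_I
    (s : ℕ) (hs : 1 ≤ s) (S : Set (Vec s)) (hS : GoodLocal S)
    (hSne : S ≠ {a : Vec s | 0 ≤ a}) (α β : Vec s)
    (hα₁ : α ∈ S) (hα₂ : α ≠ 0) (hα₃ : ∀ a ∈ S, a ≠ 0 → α ≤ a)
    (hβ₁ : 0 ≤ β) (hβ₂ : ∀ x : Vec s, 0 ≤ x → β + x ∈ S)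
    (hβ₃ : ∀ c : Vec s, 0 ≤ c → (∀ x : Vec s, 0 ≤ x → c + x ∈ S) → β ≤ c)
    (m : ℤ) (hm₁ : (m + 1) • α ≤ β) (hm₂ : ∀ m' : ℤ, (m' + 1) • α ≤ β → m' ≤ m)
    (n : ℤ) (hn₁ : 1 ≤ n) (hn₂ : (Rset α n ∩ S).Nonempty)
    (hn₃ : ∀ n' : ℤ, 1 ≤ n' → (Rset α n' ∩ S).Nonempty → n ≤ n')
    (hnm : n ≤ m + 1) :
    ∃ c : ℕ → Vec s, c 0 = β ∧
      (∀ i j : ℕ, i < j → (j : ℤ) < m * (∑ t, α t) → c i < c j) ∧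
      ∀ i : ℕ, (i : ℤ) < m * (∑ t, α t) →
        c i ∈ Kcirc S β + Kcirc S β ∧ c i < β + m • α := by
  have hS' := hS
  obtain ⟨hnn, h0S, hadd, hG1, hG2, hG3, hG4⟩ := hS'
  have hpos : ∀ i, 0 < α i := by
    intro i
    refine lt_of_le_of_ne (hnn α hα₁ i) (fun h => hα₂ (hG4 α hα₁ ⟨i, h.symm⟩))
  have hαS : ∀ r : ℕ, (r : ℤ) • α ∈ S := by
    intro r
    induction r with
    | zero => simpa using h0S
    | succ r ih =>
      have := hadd _ ih _ hα₁
      simpa [add_smul] using this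
  have hR1 : ¬ (Rset α 1 ∩ S).Nonempty := by
    rintro ⟨a, ⟨-, h1, h2⟩, haS⟩
    simp at h1 h2
    exact absurd (hα₃ a haS h1.ne') (not_le_of_gt h2)
  have hn2 : 2 ≤ n := by
    by_contra h
    have : n = 1 := by omega
    subst this
    exact hR1 hn₂
  have hm₁' : ∀ i, (m + 1) * α i ≤ β i := fun i => by simpa using hm₁ i
  have hβpos : ∀ i, 0 < β i := fun i => by
    have := hm₁' i; have := hpos i; nlinarith
  have hΔ := aux_delta S hS β hβpos hβ₂ hβ₃
  have hSK : ∀ a ∈ S, a ∈ Kideal S β := by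
    intro a ha
    show Delta S _ = ∅
    by_contra hne
    obtain ⟨b, hb, k, hbk, hbl⟩ := Set.nonempty_iff_ne_empty.2 hne
    have : a + b ∈ Delta S (β - 1) := by
      refine ⟨hadd a ha b hb, k, ?_, ?_⟩
      · simp only [Pi.sub_apply, Pi.add_apply] at hbk ⊢; omega
      · intro l hl
        have := hbl l hl
        simp only [Pi.sub_apply, Pi.add_apply] at this ⊢; omega
    rw [hΔ] at this
    exact this
  have hR : ∀ r', 1 ≤ r' → r' < n → ¬ (Rset α r' ∩ S).Nonempty := by
    intro r' h1 h2 h3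
    have := hn₃ r' h1 h3
    omega
  obtain ⟨a, ⟨ha0, ha1, ha2⟩, haS⟩ := hn₂
  obtain ⟨ha2', i, hi⟩ := Pi.lt_def.1 ha2
  simp at hi
  have hmonoα : ∀ x y : ℤ, x ≤ y → x • α ≤ y • α := by
    intro x y hxy l
    have := hpos l
    simp
    nlinarith
  have F2 : ∀ j : ℤ, 1 ≤ j → j ≤ m → β + j • α - Pi.single i 1 ∈ Kcirc S β + Kcirc S β := by
    intro j hj1 hjm
    by_cases hjn : j ≤ n - 1
    · refine aux_F2 S hS α β hpos hαS hSK j (n - j) (by omega)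
        (fun r' h1 h2 => hR r' h1 (by omega)) a haS ?_ (a - j • α) rfl ?_ ?_ i ?_
      · exact lt_of_lt_of_le ha2 ((hmonoα _ _ hnm).trans hm₁)
      · have := sub_lt_sub_right ha1 (j • α)
        rwa [← sub_smul, show n - 1 - j = n - j - 1 by ring] at this
      · rw [sub_smul]; exact sub_le_sub_right ha2' _
      · simp; linarith
    · have hnj : ((j - n + 1).toNat : ℤ) = j - n + 1 := Int.toNat_of_nonneg (by omega)
      have hjS := hαS (j - n + 1).toNat
      rw [hnj] at hjS
      have hw : a - (n - 1) • α = a + (j - n + 1) • α - j • α := by module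
      refine aux_F2 S hS α β hpos hαS hSK j 1 le_rfl
        (fun r' h1 h2 => hR r' h1 (by omega)) (a + (j - n + 1) • α) (hadd _ haS _ hjS) ?_
        (a - (n - 1) • α) hw ?_ ?_ i ?_
      · refine lt_of_lt_of_le (add_lt_add_left ha2 _) ?_
        rw [← add_smul]
        exact (hmonoα _ _ (by omega)).trans hm₁
      · simpa using ha1
      · have : n • α = (n - 1) • α + (1 : ℤ) • α := by module
        rw [sub_le_iff_le_add, add_comm, ← this]; exact ha2'
      · simp; linarith
  have hαi : (0 : Vec s) ≤ α - Pi.single i 1 := by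
    intro l
    have := hpos l
    by_cases hl : l = i
    · subst hl; simp; omega
    · simp [hl]; omega
  have hsumpos : 0 < ∑ t, α t := Finset.sum_pos (fun t _ => hpos t) ⟨i, mem_univ i⟩
  obtain ⟨A, hA⟩ : ∃ A : ℕ, ∑ t, α t = (A : ℤ) + 1 :=
    ⟨(∑ t, α t - 1).toNat, by rw [Int.toNat_of_nonneg (by omega)]; ring⟩
  obtain ⟨f, hf0, hfA, hf⟩ := aux_chain A (α - Pi.single i 1) hαi (by
    simp only [Pi.sub_apply, Finset.sum_sub_distrib, hA]
    simp)
  have hflt : ∀ d t, t + d + 1 ≤ A → f t < f (t + d + 1) := by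
    intro d
    induction d with
    | zero => intro t ht; exact hf t (by omega)
    | succ d ih => intro t ht; exact (ih t (by omega)).trans (hf _ (by omega))
  have hflt' : ∀ t, t < A → f t < α - Pi.single i 1 := by
    intro t ht
    have := hflt (A - t - 1) t (by omega)
    rwa [show t + (A - t - 1) + 1 = A by omega, hfA] at this
  have hsi : (0 : Vec s) < Pi.single i 1 := Pi.single_pos.2 (by norm_num)
  have hfle : ∀ t, t ≤ A → f t ≤ α - Pi.single i 1 := by
    intro t ht
    rcases ht.lt_or_eq with h | rfl
    · exact (hflt' t h).le
    · exact hfA.le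
  have hfα : ∀ t, t ≤ A → f t < α := fun t ht =>
    lt_of_le_of_lt (hfle t ht) (sub_lt_self _ hsi)
  have hfnn : ∀ t, t ≤ A → 0 ≤ f t := by
    intro t ht
    rcases Nat.eq_zero_or_pos t with rfl | h
    · exact hf0.ge
    · have := hflt (t - 1) 0 (by omega)
      rw [hf0, show 0 + (t - 1) + 1 = t by omega] at this
      exact this.le
  refine ⟨fun t => β + ((t / (A + 1) : ℕ) : ℤ) • α + f (t % (A + 1)), by simp [hf0], ?_, ?_⟩
  · intro t t' htt' _
    refine strictMono_nat_of_lt_succ (f := fun t : ℕ =>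
      β + ((t / (A + 1) : ℕ) : ℤ) • α + f (t % (A + 1))) ?_ htt'
    intro t
    have hr : t % (A + 1) < A + 1 := Nat.mod_lt _ (by omega)
    have hdm := Nat.div_add_mod t (A + 1)
    generalize t / (A + 1) = q at *
    generalize t % (A + 1) = r at *
    subst hdm
    by_cases h : r < A
    · have h1 : ((A + 1) * q + r + 1) / (A + 1) = q := by
        rw [add_assoc, Nat.mul_add_div (by omega), Nat.div_eq_of_lt (by omega), add_zero]
      have h2 : ((A + 1) * q + r + 1) % (A + 1) = r + 1 := by
        rw [add_assoc, Nat.mul_add_mod, Nat.mod_eq_of_lt (by omega)]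
      simp only [h1, h2]
      exact add_lt_add_right (hf r h) _
    · have h0 : r = A := by omega
      subst h0
      have h1 : ((r + 1) * q + r + 1) / (r + 1) = q + 1 := by
        rw [add_assoc, Nat.mul_add_div (by omega), Nat.div_self (by omega)]
      have h2 : ((r + 1) * q + r + 1) % (r + 1) = 0 := by
        rw [add_assoc, Nat.mul_add_mod, Nat.mod_self]
      simp only [h1, h2, hf0]
      have := add_lt_add_right (hfα r le_rfl) (β + (q : ℤ) • α)
      convert this using 1
      push_cast
      module
  · intro t ht
    rw [hA] at ht
    have hr : t % (A + 1) < A + 1 := Nat.mod_lt _ (by omega)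
    have hdm := Nat.div_add_mod t (A + 1)
    simp only
    generalize t / (A + 1) = q at *
    generalize t % (A + 1) = r at *
    subst hdm
    have hqm : (q : ℤ) + 1 ≤ m := by
      by_contra h
      have : m ≤ q := by omega
      push_cast at ht
      nlinarith
    have e1 : β + (q : ℤ) • α + f r = β + ((q : ℤ) + 1) • α - (α - f r) := by module
    constructor
    · by_cases h : r < A
      · rw [e1]
        have hlt : Pi.single i 1 < α - f r := lt_sub_comm.1 (hflt' r h)
        have hq1 : ((q : ℤ) + 1) • α ∈ S := by simpa using hαS (q + 1)
        refine aux_F1 S α β hSK hα₃ _ hq1 ?_ _ (hsi.trans hlt)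
          (sub_le_self _ (hfnn r (by omega))) ?_
        · refine lt_of_lt_of_le ?_ hm₁
          refine Pi.lt_def.2 ⟨hmonoα _ _ (by omega), i, ?_⟩
          have := hpos i
          simp
          nlinarith
        · intro k hk
          rw [hk] at hlt
          by_cases hki : i = k
          · subst hki; exact lt_irrefl _ hlt
          · have := hlt.le i
            simp [hki] at this
      · have h0 : r = A := by omega
        rw [e1, h0, hfA, sub_sub_cancel]
        exact F2 _ (by omega) hqm
    · refine lt_of_lt_of_le (add_lt_add_right (hfα r (by omega)) _) ?_
      have h1 : β + (q : ℤ) • α + α = β + ((q : ℤ) + 1) • α := by module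
      rw [h1]
      exact add_le_add_right (hmonoα _ _ hqm) _
end

section
/- Assume that n exists and that n ≤ m + 1, and set N := |β − α| (note N ≥ 1). Then there exists a sequence a_1, a_2, …, a_N of elements of ℤ^s with a_1 = β, with a_1 < a_2 < ⋯ < a_N < 2β − α (for the componentwise order as defined, where a < b means a ≤ b and a ≠ b), and such that a_i ∈ K° + K° for every i with 1 ≤ i ≤ N. -/
open Finset Pointwise

/-- No jump of `S` leads into `U`. -/
def NJ {s : ℕ} (S : Set (Vec s)) (U : Vec s) : Prop :=
  ∀ b ∈ S, ∀ i : Fin s, b i = U i - 1 → (∀ j, j ≠ i → U j ≤ b j) → False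

/-- The reflected version of `K°`: `U ∈ GP` iff `β - U ∈ K°`. -/
def GP {s : ℕ} (S : Set (Vec s)) (U : Vec s) : Prop :=
  0 ≤ U ∧ U ≠ 0 ∧ NJ S U

/-- Sums of two elements of `GP`. -/
def Gd {s : ℕ} (S : Set (Vec s)) (T : Vec s) : Prop :=
  ∃ U V, GP S U ∧ GP S V ∧ T = U + V

/-- One saturated step into a good point. -/
def Stp {s : ℕ} (S : Set (Vec s)) (A B : Vec s) : Prop :=
  ∃ i : Fin s, B = A + Pi.single i 1 ∧ Gd S B

/-- Saturated paths through good points. -/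
def Pth {s : ℕ} (S : Set (Vec s)) : Vec s → Vec s → Prop := Relation.ReflTransGen (Stp S)

lemma sum_single {s : ℕ} (A : Vec s) (i : Fin s) :
    ∑ t, (A + Pi.single i 1 : Vec s) t = ∑ t, A t + 1 := by
  simp [Finset.sum_add_distrib]

lemma GP_Kcirc {s : ℕ} {S : Set (Vec s)} {β U : Vec s} (h : GP S U) : β - U ∈ Kcirc S β := by
  obtain ⟨h0, h1, h2⟩ := h
  refine ⟨?_, ?_⟩
  · show Delta S (β - 1 - (β - U)) = ∅
    ext b
    simp only [Set.mem_empty_iff_false, iff_false]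
    rintro ⟨hb, i, hi, hj⟩
    refine h2 b hb i ?_ ?_
    · simp only [Pi.sub_apply, Pi.one_apply] at hi; omega
    · intro j hji
      have := hj j hji
      simp only [Pi.sub_apply, Pi.one_apply] at this; omega
  · refine lt_of_le_of_ne ?_ ?_
    · intro t; have := h0 t; simp only [Pi.zero_apply] at this; simp only [Pi.sub_apply]; omega
    · intro h; apply h1; simpa using h

/-- If everything in `(A, B]` is good there is a path. -/
lemma pth_of_good {s : ℕ} {S : Set (Vec s)} (k : ℕ) : ∀ (A B : Vec s), A ≤ B →
    (∑ t, B t - ∑ t, A t = k) → (∀ T, A ≤ T → T ≤ B → T ≠ A → Gd S T) → Pth S A B := by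
  induction k with
  | zero =>
    intro A B hAB hk _
    have : A = B := by
      by_contra hne
      have : A < B := lt_of_le_of_ne hAB hne
      obtain ⟨-, i, hi⟩ := Pi.lt_def.1 this
      have := Finset.sum_lt_sum (s := Finset.univ) (fun t _ => hAB t) ⟨i, Finset.mem_univ i, hi⟩
      push_cast at hk
      omega
    subst this
    exact Relation.ReflTransGen.refl
  | succ k ih =>
    intro A B hAB hk hg
    have hne : A ≠ B := by
      rintro rfl
      push_cast at hk
      omega
    obtain ⟨-, i, hi⟩ := Pi.lt_def.1 (lt_of_le_of_ne hAB hne)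
    have hle : A + Pi.single i 1 ≤ B := by
      intro t
      by_cases hti : t = i
      · subst hti; simp; omega
      · simpa [hti] using hAB t
    have hle0 : A ≤ A + Pi.single i 1 := by
      intro t
      by_cases hti : t = i
      · subst hti; simp
      · simp [hti]
    have hne' : A + Pi.single i 1 ≠ A := by
      intro h
      have := congrFun h i
      simp at this
    refine Relation.ReflTransGen.head ⟨i, rfl, hg _ hle0 hle hne'⟩ (ih _ _ hle ?_ ?_)
    · rw [sum_single]; push_cast at hk; omega
    · intro T h1 h2 h3
      refine hg T (hle0.trans h1) h2 ?_
      rintro rfl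
      exact hne' (le_antisymm h1 hle0)

lemma sum_lt_of {s : ℕ} {A B : Vec s} (h : A ≤ B) (hne : B ≠ A) : ∑ t, A t < ∑ t, B t := by
  obtain ⟨-, i, hi⟩ := Pi.lt_def.1 (lt_of_le_of_ne h (Ne.symm hne))
  exact Finset.sum_lt_sum (s := Finset.univ) (fun t _ => h t) ⟨i, Finset.mem_univ i, hi⟩

/-- Unfolding a path into a function. -/
lemma pth_fun {s : ℕ} {S : Set (Vec s)} {A B : Vec s} (h : Pth S A B) :
    ∃ (N : ℕ) (f : ℕ → Vec s), f 0 = A ∧ f N = B ∧ (∑ t, B t - ∑ t, A t = N) ∧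
      ∀ k, k < N → Stp S (f k) (f (k+1)) := by
  induction h with
  | refl => exact ⟨0, fun _ => A, rfl, rfl, by simp, by simp⟩
  | tail _ hst ih =>
    rename_i C D _
    obtain ⟨N, f, h0, hN, hs, hf⟩ := ih
    refine ⟨N+1, fun k => if k ≤ N then f k else D, by simp [h0], by simp, ?_, ?_⟩
    · obtain ⟨i, rfl, -⟩ := hst
      rw [sum_single]; push_cast; omega
    · intro k hk
      by_cases hkN : k < N
      · have h1 : k ≤ N := by omega
        have h2 : k + 1 ≤ N := by omega
        simp only [h1, h2, if_true]
        exact hf k hkN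
      · have h1 : k = N := by omega
        subst h1
        simp only [le_refl, if_true, Nat.not_succ_le_self, if_false]
        rw [hN]; exact hst

section main
variable {s : ℕ} {S : Set (Vec s)} {α β : Vec s}

lemma NJ_sup {U V : Vec s} (hU : NJ S U) (hV : NJ S V) : NJ S (U ⊔ V) := by
  intro b hb i hi hj
  simp only [Pi.sup_apply] at hi hj
  rcases le_total (U i) (V i) with h | h
  · rw [sup_eq_right.2 h] at hi
    exact hV b hb i hi fun j hji => le_trans le_sup_right (hj j hji)
  · rw [sup_eq_left.2 h] at hi
    exact hU b hb i hi fun j hji => le_trans le_sup_left (hj j hji)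

lemma NJ_sub (hadd : ∀ a ∈ S, ∀ b ∈ S, a + b ∈ S) {U c : Vec s} (hU : NJ S U) (hc : c ∈ S) :
    NJ S (U - c) := by
  intro b hb i hi hj
  simp only [Pi.sub_apply] at hi hj
  refine hU (b + c) (hadd b hb c hc) i ?_ ?_
  · simp only [Pi.add_apply]; omega
  · intro j hji; have := hj j hji; simp only [Pi.add_apply]; omega

lemma NJ_small (hα₃ : ∀ a ∈ S, a ≠ 0 → α ≤ a) {V : Vec s} (h0 : 0 ≤ V) (h1 : V ≤ α)
    (h2 : 2 ≤ ∑ t, V t) : GP S V := by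
  refine ⟨h0, ?_, ?_⟩
  · rintro rfl; simp at h2
  · intro b hb i hi hj
    have hb0 : b = 0 := by
      by_contra hne
      have e1 : α i ≤ b i := hα₃ b hb hne i
      have e2 : V i ≤ α i := h1 i
      omega
    subst hb0
    have : ∑ t, V t ≤ ∑ t, (Pi.single i 1 : Vec s) t := by
      refine Finset.sum_le_sum fun t _ => ?_
      by_cases hti : t = i
      · subst hti; simp only [Pi.zero_apply, Pi.single_eq_same] at hi ⊢; omega
      · have := hj t hti; simpa [hti] using this
    rw [Finset.sum_pi_single'] at this
    simp at this
    omega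

lemma pth_box (hα₃ : ∀ a ∈ S, a ≠ 0 → α ≤ a) {U A B : Vec s} (hU : GP S U)
    (h1 : U ≤ A) (h2 : A ≤ B) (h3 : B ≤ U + α) (hne : A ≠ U) : Pth S A B := by
  have hs : 0 ≤ ∑ t, B t - ∑ t, A t := by
    have := Finset.sum_le_sum (s := Finset.univ) (fun t _ => h2 t); omega
  refine pth_of_good (∑ t, B t - ∑ t, A t).toNat A B h2 (by omega) ?_
  intro T hT1 hT2 hT3
  refine ⟨U, T - U, hU, NJ_small hα₃ ?_ ?_ ?_, by simp⟩
  · exact sub_nonneg.2 (h1.trans hT1)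
  · rw [sub_le_iff_le_add']; exact hT2.trans h3
  · have e1 := sum_lt_of h1 hne
    have e2 := sum_lt_of hT1 hT3
    simp only [Pi.sub_apply, Finset.sum_sub_distrib]
    omega

lemma zsmul_memS (h0 : (0 : Vec s) ∈ S) (hadd : ∀ a ∈ S, ∀ b ∈ S, a + b ∈ S) (hα : α ∈ S)
    (q : ℤ) (hq : 0 ≤ q) : q • α ∈ S := by
  obtain ⟨k, rfl⟩ := Int.eq_ofNat_of_zero_le hq
  induction k with
  | zero => simpa using h0
  | succ k ih =>
    have : ((k + 1 : ℕ) : ℤ) • α = (k : ℤ) • α + α := by push_cast; rw [add_smul, one_smul]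
    rw [this]
    exact hadd _ (ih (by positivity)) _ hα

lemma low_shape (hnn : ∀ a ∈ S, 0 ≤ a) (h0 : (0 : Vec s) ∈ S)
    (hadd : ∀ a ∈ S, ∀ b ∈ S, a + b ∈ S) (hmin : ∀ a ∈ S, ∀ b ∈ S, a ⊓ b ∈ S)
    (hα : α ∈ S) (hpos : ∀ t, 1 ≤ α t) (n : ℤ)
    (hn₃ : ∀ n' : ℤ, 1 ≤ n' → (Rset α n' ∩ S).Nonempty → n ≤ n') (b : Vec s) (hb : b ∈ S)
    (q : ℕ) (hq : (q : ℤ) ≤ n - 1) : (∃ p : ℤ, b = p • α) ∨ (q : ℤ) • α ≤ b := by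
  induction q with
  | zero => right; simpa using hnn b hb
  | succ q ih =>
    rcases ih (by push_cast at hq; omega) with h | h
    · exact Or.inl h
    · have hq1 : ((q : ℤ) + 1) • α ∈ S := zsmul_memS h0 hadd hα _ (by positivity)
      have hm := hmin b hb _ hq1
      have hle : (q : ℤ) • α ≤ b ⊓ ((q : ℤ) + 1) • α := by
        refine le_inf h ?_
        intro t
        have := hpos t
        simp only [Pi.smul_apply, smul_eq_mul]; nlinarith
      by_cases e1 : b ⊓ ((q : ℤ) + 1) • α = ((q : ℤ) + 1) • α
      · right; push_cast; rw [← e1]; exact inf_le_left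
      · by_cases e2 : (q : ℤ) • α = b ⊓ ((q : ℤ) + 1) • α
        · left; refine ⟨q, ?_⟩
          ext t
          have e3 := congrFun e2 t
          have := hpos t
          simp only [Pi.smul_apply, smul_eq_mul, Pi.inf_apply, add_mul, one_mul] at e3 ⊢
          rcases min_choice (b t) (q * α t + α t) with h | h <;> rw [h] at e3 <;> omega
        · exfalso
          have := hn₃ (q + 1) (by omega) ⟨_, ⟨hnn _ hm, ?_, ?_⟩, hm⟩
          · push_cast at hq; omega
          · rw [add_sub_cancel_right]; exact lt_of_le_of_ne hle e2
          · exact lt_of_le_of_ne inf_le_right e1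

lemma GP_low (hnn : ∀ a ∈ S, 0 ≤ a) (h0 : (0 : Vec s) ∈ S)
    (hadd : ∀ a ∈ S, ∀ b ∈ S, a + b ∈ S) (hmin : ∀ a ∈ S, ∀ b ∈ S, a ⊓ b ∈ S)
    (hα : α ∈ S) (hpos : ∀ t, 1 ≤ α t) (n : ℤ)
    (hn₃ : ∀ n' : ℤ, 1 ≤ n' → (Rset α n' ∩ S).Nonempty → n ≤ n')
    (j : ℤ) (hj0 : 0 ≤ j) (hjn : j ≤ n - 2) (D : Vec s) (hD0 : 0 ≤ D) (hD1 : D ≤ α)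
    (hD2 : 2 ≤ ∑ t, D t) : GP S (j • α + D) := by
  have hpα : 0 ≤ ∑ t, α t := Finset.sum_nonneg fun t _ => by have := hpos t; omega
  have hjα : 0 ≤ j • α := by
    intro t; have := hpos t; simp only [Pi.zero_apply, Pi.smul_apply, smul_eq_mul]; positivity
  refine ⟨add_nonneg hjα hD0, ?_, ?_⟩
  · intro h
    have : D = 0 := le_antisymm (by rw [← h]; exact le_add_of_nonneg_left hjα) hD0
    subst this; simp at hD2
  · intro b hb i hi hl
    simp only [Pi.add_apply, Pi.smul_apply, smul_eq_mul] at hi hl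
    rcases low_shape hnn h0 hadd hmin hα hpos n hn₃ b hb (n-1).toNat (by omega) with ⟨p, rfl⟩ | h
    · simp only [Pi.smul_apply, smul_eq_mul] at hi hl
      have h1 := hD1 i
      have h2 := hpos i
      have hp : p < j + 1 := by
        by_contra hc
        push Not at hc
        nlinarith
      have hs : ∑ t, (j * α t + D t) ≤ ∑ t, (p * α t + (Pi.single i 1 : Vec s) t) := by
        refine Finset.sum_le_sum fun t _ => ?_
        by_cases hti : t = i
        · subst hti; simp; omega
        · have := hl t hti; simpa [hti] using this
      rw [Finset.sum_add_distrib, Finset.sum_add_distrib, ← Finset.mul_sum, ← Finset.mul_sum] at hs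
      simp at hs
      nlinarith
    · have h3 := h i
      have h1 := hD1 i
      have h2 := hpos i
      rw [Int.toNat_of_nonneg (by omega)] at h3
      simp only [Pi.smul_apply, smul_eq_mul] at h3
      nlinarith

/-- `Δ^S(γ) = ∅`. -/
lemma NJ_beta (hS : GoodLocal S) (hβ₁ : 0 ≤ β) (hβ₂ : ∀ x : Vec s, 0 ≤ x → β + x ∈ S)
    (hβ₃ : ∀ c : Vec s, 0 ≤ c → (∀ x : Vec s, 0 ≤ x → c + x ∈ S) → β ≤ c) : NJ S β := by
  obtain ⟨hnn, h0, hadd, hmin, hG2, -, -⟩ := hS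
  intro b hb i hi hj
  have hge : ∀ c : Vec s, β ≤ c → c ∈ S := by
    intro c hc
    have := hβ₂ (c - β) (sub_nonneg.2 hc)
    simpa using this
  -- raise the other coordinates
  have key : ∀ (k : ℕ) (c b : Vec s), b ∈ S → b i = β i - 1 → (∀ j, j ≠ i → β j ≤ b j) →
      ∑ t ∈ Finset.univ.erase i, (c t - b t).toNat = k →
      ∃ b' ∈ S, b' i = β i - 1 ∧ ∀ j, j ≠ i → c j ≤ b' j := by
    intro k
    induction k using Nat.strong_induction_on with
    | _ k ih =>
      intro c b hb hi hj hk
      by_cases hall : ∀ j, j ≠ i → c j ≤ b j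
      · exact ⟨b, hb, hi, hall⟩
      · push Not at hall
        obtain ⟨j, hji, hjc⟩ := hall
        have hd : (b ⊔ β) + Pi.single i 1 ∈ S := by
          refine hge _ ?_
          intro t
          by_cases hti : t = i
          · subst hti; simp; omega
          · simp [hti]
        obtain ⟨ε, hε, h1, h2⟩ := hG2 b hb _ hd j (by
          simp [hji, hj j hji])
        refine ih _ ?_ c ε hε ?_ ?_ rfl
        · rw [← hk]
          refine Finset.sum_lt_sum ?_ ⟨j, by simp [hji], ?_⟩
          · intro t ht
            have hti : t ≠ i := by simpa using ht
            by_cases htj : t = j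
            · subst htj; omega
            · have := (h2 t htj).1
              simp [hti] at this
              have := hj t hti
              omega
          · omega
        · have := (h2 i (Ne.symm hji)).2 (by simp; omega)
          rw [this]; simp; omega
        · intro t hti
          by_cases htj : t = j
          · subst htj; have := hj t hti; omega
          · have := (h2 t htj).1
            simp [hti] at this
            have := hj t hti
            omega
  have hcon := hβ₃ (β - Pi.single i 1) ?_ ?_
  · have := hcon i
    simp at this
  · intro t
    by_cases hti : t = i
    · subst hti; have := hnn b hb t; simp at this ⊢; omega
    · simpa [hti] using hβ₁ t
  · intro x hx
    obtain ⟨b', hb', e1, e2⟩ := key _ (β + x) b hb hi hj rfl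
    by_cases hxi : x i = 0
    · have hd : β + x ∈ S := hβ₂ x hx
      have := hmin b' hb' _ hd
      convert this using 1
      ext t
      by_cases hti : t = i
      · subst hti; simp; omega
      · have := e2 t hti
        simp at this
        simp [hti]; omega
    · refine hge _ ?_
      intro t
      have := hx t
      by_cases hti : t = i
      · subst hti; simp at this ⊢; omega
      · simpa [hti] using this

/-- If `|α| = 2` then no-jump vectors have even size. -/
lemma even_of_two (h0 : (0 : Vec s) ∈ S)
    (hadd : ∀ a ∈ S, ∀ b ∈ S, a + b ∈ S) (hα : α ∈ S) (hpos : ∀ t, 1 ≤ α t)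
    (h2 : ∑ t, α t = 2) {W : Vec s} (hW0 : 0 ≤ W) (hW : NJ S W) : Even (∑ t, W t) := by
  have hs : s ≤ 2 := by
    have := Finset.sum_le_sum (s := (Finset.univ : Finset (Fin s))) (fun t _ => hpos t)
    simp at this; omega
  interval_cases s
  · simp
  · simp only [Fin.sum_univ_one] at h2 ⊢
    by_contra hc
    rw [Int.not_even_iff_odd] at hc
    obtain ⟨k, hk⟩ := hc
    have := hW0 0
    simp only [Pi.zero_apply] at this
    refine hW (k • α) (zsmul_memS h0 hadd hα k (by omega)) 0 ?_ ?_
    · simp [h2]; omega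
    · intro j hj; exact absurd (Subsingleton.elim j 0) hj
  · simp only [Fin.sum_univ_two] at h2 ⊢
    have a0 := hpos 0
    have a1 := hpos 1
    have w0 := hW0 0
    have w1 := hW0 1
    have b0 : α 0 = 1 := by omega
    have b1 : α 1 = 1 := by omega
    simp only [Pi.zero_apply] at w0 w1
    rcases lt_trichotomy (W 0) (W 1) with h | h | h
    · exfalso
      refine hW ((W 1 - 1) • α) (zsmul_memS h0 hadd hα _ (by omega)) 1 ?_ ?_
      · simp [b1]
      · intro j hj
        have : j = 0 := by omega
        subst this
        simp [b0]; omega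
    · rw [h]; exact ⟨_, rfl⟩
    · exfalso
      refine hW ((W 0 - 1) • α) (zsmul_memS h0 hadd hα _ (by omega)) 0 ?_ ?_
      · simp [b0]
      · intro j hj
        have : j = 1 := by omega
        subst this
        simp [b1]; omega

end main

lemma main_path {s : ℕ} {S : Set (Vec s)} (hS : GoodLocal S) {α β : Vec s}
    (hα₁ : α ∈ S) (hα₃ : ∀ a ∈ S, a ≠ 0 → α ≤ a) (hpos : ∀ t, 1 ≤ α t)
    (hβ : NJ S β)
    (n : ℤ) (hn2 : 2 ≤ n) (y : Vec s) (hyS : y ∈ S) (hy1 : (n - 1) • α < y) (hy2 : y < n • α)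
    (hn₃ : ∀ n' : ℤ, 1 ≤ n' → (Rset α n' ∩ S).Nonempty → n ≤ n')
    (hnβ : n • α ≤ β) : Pth S α β := by
  obtain ⟨hnn, h0, hadd, hmin, -, -, -⟩ := hS
  have hα0 : 0 ≤ α := fun t => by have := hpos t; simp; omega
  set z : Vec s := y - (n - 1) • α with hz
  have hz0 : 0 ≤ z := sub_nonneg.2 hy1.le
  have hzne : z ≠ 0 := fun h => hy1.ne (sub_eq_zero.1 h).symm
  have hyz : y = (n - 1) • α + z := by rw [hz]; abel
  have hnα : n • α = (n - 1) • α + α := by rw [sub_smul, one_smul]; abel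
  have hzα : z ≤ α := by
    have := hy2.le
    rw [hyz, hnα] at this
    exact le_of_add_le_add_left this
  have hzne' : α ≠ z := by
    intro h
    apply hy2.ne
    rw [hyz, hnα, ← h]
  have hzs : 1 ≤ ∑ t, z t := by
    have := sum_lt_of hz0 hzne
    simp at this; omega
  have hzs' := sum_lt_of hzα hzne'
  have hα3 : 3 ≤ ∑ t, α t := by
    by_contra hc
    have h2 : ∑ t, α t = 2 := by omega
    have hz1 : ∑ t, z t = 1 := by omega
    have e1 := even_of_two h0 hadd hα₁ hpos h2 (sub_nonneg.2 (hy2.le.trans hnβ))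
      (NJ_sub hadd hβ hyS)
    have e2 := even_of_two h0 hadd hα₁ hpos h2
      (sub_nonneg.2 (hy1.le.trans (hy2.le.trans hnβ)))
      (NJ_sub hadd hβ (zsmul_memS h0 hadd hα₁ (n-1) (by omega)))
    have : ∑ t, (β - (n-1) • α) t = ∑ t, (β - y) t + 1 := by
      have e3 : ∑ t, (β - (n-1) • α) t = ∑ t, (β - y) t + ∑ t, z t := by
        rw [← Finset.sum_add_distrib]
        refine Finset.sum_congr rfl fun t _ => ?_
        rw [hyz]; simp only [Pi.sub_apply, Pi.add_apply]; ring
      rw [e3, hz1]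
    rw [this] at e2
    rw [Int.even_add_one] at e2
    exact e2 e1
  have low := GP_low hnn h0 hadd hmin hα₁ hpos n hn₃
  have succ_smul : ∀ j : ℤ, (j - 1) • α + α = j • α := fun j => by
    rw [sub_smul, one_smul]; abel
  have GPj : ∀ j : ℤ, 1 ≤ j → j ≤ n - 1 → GP S (j • α) := by
    intro j h1 h2
    have := low (j - 1) (by omega) (by omega) α hα0 le_rfl (by omega)
    rwa [succ_smul] at this
  -- a pair of directions
  obtain ⟨i, -, hi⟩ : ∃ i, 0 ≤ z i ∧ z i < α i := by
    obtain ⟨-, i, hi⟩ := Pi.lt_def.1 (lt_of_le_of_ne hzα hzne'.symm)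
    exact ⟨i, hz0 i, hi⟩
  have single_le : Pi.single i 1 ≤ α := by
    intro t
    by_cases hti : t = i
    · subst hti; simpa using hpos t
    · simpa [hti] using hα0 t
  obtain ⟨l, hl⟩ : ∃ l, (Pi.single i 1 + Pi.single l 1 : Vec s) ≤ α := by
    have hne : α ≠ Pi.single i 1 := by
      intro h; rw [h] at hα3; simp at hα3
    obtain ⟨-, l, hl⟩ := Pi.lt_def.1 (lt_of_le_of_ne single_le hne.symm)
    refine ⟨l, fun t => ?_⟩
    by_cases htl : t = l
    · subst htl; simp only [Pi.add_apply, Pi.single_eq_same]; omega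
    · have := single_le t
      simpa [htl] using this
  have single_nn : ∀ j : Fin s, (0 : Vec s) ≤ Pi.single j 1 := by
    intro j t
    by_cases htj : t = j
    · subst htj; simp
    · simp [htj]
  -- finishing a box after the first step
  have fin_box : ∀ U : Vec s, GP S U → Gd S (U + Pi.single i 1) → Pth S U (U + α) := by
    intro U hU hg
    refine Relation.ReflTransGen.head ⟨i, rfl, hg⟩ (pth_box hα₃ hU ?_ ?_ le_rfl ?_)
    · exact le_add_of_nonneg_right (single_nn i)
    · gcongr
    · intro h
      have := congrFun h i
      simp at this
  have lowgood : ∀ j : ℤ, 1 ≤ j → j ≤ n - 1 → Gd S (j • α + Pi.single i 1) := by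
    intro j h1 h2
    refine ⟨(j-1) • α + (α - Pi.single l 1), Pi.single i 1 + Pi.single l 1,
      low (j-1) (by omega) (by omega) _ ?_ ?_ ?_, NJ_small hα₃ ?_ hl ?_, ?_⟩
    · rw [sub_nonneg]; exact (le_add_of_nonneg_left (single_nn i)).trans hl
    · rw [sub_le_self_iff]; exact single_nn l
    · simp [Finset.sum_sub_distrib]; omega
    · exact add_nonneg (single_nn i) (single_nn l)
    · rw [sum_single]; simp
    · rw [← succ_smul j]; abel
  have path1 : ∀ k : ℕ, (k : ℤ) + 1 ≤ n → Pth S α (((k : ℤ) + 1) • α) := by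
    intro k
    induction k with
    | zero => intro _; simp only [Nat.cast_zero, zero_add, one_smul]; exact Relation.ReflTransGen.refl
    | succ k ih =>
      intro hk
      push_cast at hk
      refine Relation.ReflTransGen.trans (ih (by omega)) ?_
      have := fin_box (((k : ℤ) + 1) • α) (GPj _ (by omega) (by omega))
        (lowgood _ (by omega) (by omega))
      have e : (((k + 1 : ℕ) : ℤ) + 1) • α = ((k : ℤ) + 1) • α + α := by
        push_cast
        rw [add_smul ((k : ℤ) + 1) 1 α, one_smul]
      rw [e]
      exact this
  have p1 : Pth S α (n • α) := by
    have := path1 (n-1).toNat (by omega)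
    rwa [Int.toNat_of_nonneg (by omega), sub_add_cancel] at this
  refine Relation.ReflTransGen.trans p1 ?_
  -- second part
  set F : ℤ → Vec s := fun k => (n - 1) • α ⊔ (β - k • α) with hF
  have hn1 : GP S ((n-1) • α) := GPj (n-1) (by omega) le_rfl
  have GPF : ∀ k : ℤ, 0 ≤ k → GP S (F k) := by
    intro k hk
    have hle : (n-1) • α ≤ F k := le_sup_left
    refine ⟨hn1.1.trans hle, ?_, NJ_sup hn1.2.2 (NJ_sub hadd hβ (zsmul_memS h0 hadd hα₁ k hk))⟩
    intro h
    rw [h] at hle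
    exact hn1.2.1 (le_antisymm hle hn1.1)
  have F1 : F 1 + α = β := by
    have : F 1 = β - α := by
      simp only [hF, one_smul]
      apply sup_eq_right.2
      rw [le_sub_iff_add_le, ← hnα]; exact hnβ
    rw [this]; abel
  obtain ⟨K, hK⟩ : ∃ K : ℕ, β ≤ (K : ℤ) • α := by
    refine ⟨∑ t, (β t).toNat, fun t => ?_⟩
    have h1 : (β t).toNat ≤ ∑ t, (β t).toNat :=
      Finset.single_le_sum (f := fun t => (β t).toNat) (fun _ _ => Nat.zero_le _) (Finset.mem_univ t)
    have h2 := hpos t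
    simp only [Pi.smul_apply, smul_eq_mul]
    have h3 : β t ≤ ((∑ t, (β t).toNat : ℕ) : ℤ) := by omega
    nlinarith
  have FK : F (K + 1) + α = n • α := by
    have : F (K + 1) = (n-1) • α := by
      apply sup_eq_left.2
      refine le_trans ?_ hn1.1
      rw [sub_nonpos]
      refine hK.trans ?_
      rw [add_smul, one_smul]
      exact le_add_of_nonneg_right hα0
    rw [this, hnα]
  have step : ∀ k : ℤ, 1 ≤ k → Pth S (F (k+1) + α) (F k + α) := by
    intro k hk
    have hle1 : F (k+1) ≤ F k := by
      refine sup_le_sup le_rfl ?_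
      rw [add_smul, one_smul]
      gcongr
      exact le_add_of_nonneg_right hα0
    have hle2 : F k ≤ F (k+1) + α := by
      intro t
      have := hpos t
      simp only [hF, Pi.sup_apply, Pi.add_apply, Pi.sub_apply, Pi.smul_apply, smul_eq_mul, add_mul,
        one_mul]
      omega
    by_cases he : F (k+1) + α = F k
    · have hbig : n • α ≤ β - k • α ∧ F k = β - k • α := by
        have hh : ∀ t, n * α t ≤ β t - k * α t := by
          intro t
          have e := congrFun he t
          have := hpos t
          simp only [hF, Pi.sup_apply, Pi.add_apply, Pi.sub_apply, Pi.smul_apply, smul_eq_mul,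
            add_mul, one_mul, sub_mul] at e
          omega
        have h1 : n • α ≤ β - k • α := fun t => by simpa using hh t
        refine ⟨h1, sup_eq_right.2 (le_trans ?_ h1)⟩
        rw [hnα]; exact le_add_of_nonneg_right hα0
      rw [he]
      refine fin_box _ (GPF k (by omega)) ?_
      refine ⟨(n-2) • α + (z + Pi.single i 1), β - ((k-1) • α + y),
        low (n-2) (by omega) (by omega) _ ?_ ?_ ?_, ⟨?_, ?_, ?_⟩, ?_⟩
      · exact add_nonneg hz0 (single_nn i)
      · intro t
        by_cases hti : t = i
        · subst hti; simp only [Pi.add_apply, Pi.single_eq_same]; omega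
        · have := hzα t
          simpa [hti] using this
      · rw [sum_single]; omega
      · intro t
        have h1 := hbig.1 t
        have h2 := hy2.le t
        have h3 := hpos t
        simp only [Pi.zero_apply, Pi.sub_apply, Pi.add_apply, Pi.smul_apply, smul_eq_mul, sub_mul,
          one_mul] at h1 h2 ⊢
        omega
      · intro h
        have h0 := congrFun h i
        have h1 := hbig.1 i
        have h2 := hy2.le i
        have h3 := hpos i
        simp only [Pi.zero_apply, Pi.sub_apply, Pi.add_apply, Pi.smul_apply, smul_eq_mul, sub_mul,
          one_mul] at h0 h1 h2
        omega
      · exact NJ_sub hadd hβ (hadd _ (zsmul_memS h0 hadd hα₁ (k-1) (by omega)) _ hyS)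
      · rw [hbig.2, hyz]
        ext t
        simp only [Pi.sub_apply, Pi.add_apply, Pi.smul_apply, smul_eq_mul]
        ring
    · exact pth_box hα₃ (GPF k (by omega)) hle2 (by gcongr) le_rfl he
  have all : ∀ k : ℕ, Pth S (F (k + 1) + α) (F 1 + α) := by
    intro k
    induction k with
    | zero => simp only [Nat.cast_zero, zero_add]; exact Relation.ReflTransGen.refl
    | succ k ih =>
      refine Relation.ReflTransGen.trans ?_ ih
      push_cast
      exact step (k+1) (by omega)
  have := all K
  rwa [FK, F1] at this

/-- There is a strictly increasing sequence `β = a₁ < a₂ < … < a_N < 2β - α`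
with `N = |β - α|` and every `aᵢ ∈ K° + K°`. -/
theorem max_noether_full_seq
    (s : ℕ) (hs : 1 ≤ s) (S : Set (Vec s)) (hS : GoodLocal S)
    (hSne : S ≠ {a : Vec s | 0 ≤ a}) (α β : Vec s)
    (hα₁ : α ∈ S) (hα₂ : α ≠ 0) (hα₃ : ∀ a ∈ S, a ≠ 0 → α ≤ a)
    (hβ₁ : 0 ≤ β) (hβ₂ : ∀ x : Vec s, 0 ≤ x → β + x ∈ S)
    (hβ₃ : ∀ c : Vec s, 0 ≤ c → (∀ x : Vec s, 0 ≤ x → c + x ∈ S) → β ≤ c)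
    (m : ℤ) (hm₁ : (m + 1) • α ≤ β) (hm₂ : ∀ m' : ℤ, (m' + 1) • α ≤ β → m' ≤ m)
    (n : ℤ) (hn₁ : 1 ≤ n) (hn₂ : (Rset α n ∩ S).Nonempty)
    (hn₃ : ∀ n' : ℤ, 1 ≤ n' → (Rset α n' ∩ S).Nonempty → n ≤ n')
    (hnm : n ≤ m + 1) :
    1 ≤ ∑ t, (β t - α t) ∧
    ∃ a : ℕ → Vec s, a 1 = β ∧
      (∀ i j : ℕ, 1 ≤ i → i < j → (j : ℤ) ≤ ∑ t, (β t - α t) → a i < a j) ∧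
      ∀ i : ℕ, 1 ≤ i → (i : ℤ) ≤ ∑ t, (β t - α t) →
        a i ∈ Kcirc S β + Kcirc S β ∧ a i < (2 : ℤ) • β - α := by
  have hpos : ∀ t, 1 ≤ α t := by
    intro t
    have h1 := hS.1 α hα₁ t
    have h2 : α t ≠ 0 := fun h => hα₂ (hS.2.2.2.2.2.2 α hα₁ ⟨t, h⟩)
    simp only [Pi.zero_apply] at h1
    omega
  obtain ⟨y, ⟨hy0, hy1, hy2⟩, hyS⟩ := hn₂
  have hn2 : 2 ≤ n := by
    by_contra hc
    have : n = 1 := by omega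
    subst this
    have hne : y ≠ 0 := by
      rintro rfl
      simp at hy1
    have h1 := hα₃ y hyS hne
    rw [one_smul] at hy2
    exact absurd h1 (not_le_of_gt hy2)
  have hnβ : n • α ≤ β := by
    refine le_trans ?_ hm₁
    intro t
    have := hpos t
    simp only [Pi.smul_apply, smul_eq_mul]
    nlinarith
  have hβ := NJ_beta hS hβ₁ hβ₂ hβ₃
  have hP := main_path hS hα₁ hα₃ hpos hβ n hn2 y hyS hy1 hy2 hn₃ hnβ
  obtain ⟨N, f, hf0, hfN, hsum, hst⟩ := pth_fun hP
  have hsum' : ∑ t, (β t - α t) = N := by rw [Finset.sum_sub_distrib]; exact hsum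
  rw [hsum']
  have hlt : ∀ k, k < N → f k < f (k+1) := by
    intro k hk
    obtain ⟨i, hi, -⟩ := hst k hk
    rw [hi, Pi.lt_def]
    refine ⟨fun t => ?_, i, by simp⟩
    by_cases hti : t = i
    · subst hti; simp
    · simp [hti]
  have hmono : ∀ d k, k + d + 1 ≤ N → f k < f (k + d + 1) := by
    intro d
    induction d with
    | zero => intro k hk; exact hlt k (by omega)
    | succ d ih => intro k hk; exact (ih k (by omega)).trans (hlt (k + d + 1) (by omega))
  have hmono' : ∀ k l, k < l → l ≤ N → f k < f l := by
    intro k l h1 h2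
    have := hmono (l - k - 1) k (by omega)
    rwa [show k + (l - k - 1) + 1 = l by omega] at this
  refine ⟨?_, fun i => (2 : ℤ) • β - f (N + 1 - i), ?_, ?_, ?_⟩
  · have : α ≠ β := by
      intro h
      have h1 := hnβ ⟨0, hs⟩
      have h2 := hpos ⟨0, hs⟩
      rw [← h] at h1
      simp only [Pi.smul_apply, smul_eq_mul] at h1
      nlinarith
    by_contra hc
    have : N = 0 := by omega
    subst this
    apply this
    rw [← hf0, ← hfN]
  · simp only [Nat.add_sub_cancel, hfN, two_smul]
    abel
  · intro i j h1 h2 h3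
    have h3' : j ≤ N := by exact_mod_cast h3
    exact sub_lt_sub_left (hmono' _ _ (by omega) (by omega)) _
  · intro i h1 h2
    have h2' : i ≤ N := by exact_mod_cast h2
    refine ⟨?_, ?_⟩
    · obtain ⟨_, -, U, V, hU, hV, hUV⟩ := hst (N - i) (by omega)
      rw [show N - i + 1 = N + 1 - i by omega] at hUV
      refine Set.mem_add.2 ⟨β - U, GP_Kcirc hU, β - V, GP_Kcirc hV, ?_⟩
      simp only [hUV, two_smul]
      abel
    · have := hmono' 0 (N + 1 - i) (by omega) (by omega)
      rw [hf0] at this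
      exact sub_lt_sub_left this _
end
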